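/- For all information structures u, v on K × ℕ × ℕ: sup_{g∈𝒢}(val(v,g) − val(u,g)) = inf{ ‖u' − v'‖ : u', v' information structures with u' ⪯ u and v' ⪰ v }, where w ⪰ w' means val(w,g) ≥ val(w',g) for every g ∈ 𝒢. -/

import Mathlib

open scoped BigOperators ENNReal

namespace ValueDistance

/-- An information structure: a probability distribution on `K × ℕ × ℕ`
(state, signal of player 1, signal of player 2). -/
abbrev InfoStruct (K : Type) := PMF (K × ℕ × ℕ)

/-- A behavior strategy / garbling : a map `ℕ → Δ(ℕ)`. -/
abbrev Garbling : Type := ℕ → PMF ℕ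

variable {K : Type}

/-- `g` is a payoff function with action bound `L` : values in `[-1,1]`,
`g k i j = -1` when `i ≥ L`, and `g k i j = 1` when `i < L` and `j ≥ L`. -/
def IsPayoffL (L : ℕ) (g : K → ℕ → ℕ → ℝ) : Prop :=
  (∀ k i j, g k i j ∈ Set.Icc (-1 : ℝ) 1) ∧
  (∀ k i j, L ≤ i → g k i j = -1) ∧
  (∀ k i j, i < L → L ≤ j → g k i j = 1)

/-- `g` belongs to the set `𝒢` of payoff functions. -/
def IsPayoff (g : K → ℕ → ℕ → ℝ) : Prop := ∃ L, IsPayoffL L g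

/-- `g` belongs to the set `𝒢₁` of single-agent (player 1) problems. -/
def IsPayoff1 (g : K → ℕ → ℕ → ℝ) : Prop :=
  IsPayoff g ∧ ∀ k i j j', g k i j = g k i j'

/-- Expected payoff in the Bayesian game `Γ(u,g)` when player 1 uses the behavior
strategy `σ` and player 2 uses `τ`. -/
noncomputable def payoff (u : InfoStruct K) (g : K → ℕ → ℕ → ℝ)
    (σ τ : Garbling) : ℝ :=
  ∑' (x : K × ℕ × ℕ) (i : ℕ) (j : ℕ),
    (u x).toReal * (σ x.2.1 i).toReal * (τ x.2.2 j).toReal * g x.1 i j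

/-- The value `val(u,g)` of the zero-sum Bayesian game `Γ(u,g)`
(the common value of `sup inf` and `inf sup` of the expected payoff;
we take `sup inf` as the definition). -/
noncomputable def val (u : InfoStruct K) (g : K → ℕ → ℕ → ℝ) : ℝ :=
  ⨆ σ : Garbling, ⨅ τ : Garbling, payoff u g σ τ

/-- Total variation distance `‖u − v‖`. -/
noncomputable def tv {α : Type} (u v : PMF α) : ℝ :=
  ∑' x : α, |(u x).toReal - (v x).toReal|

/-- `q.u` : player 1's signal garbled through `q`. -/
noncomputable def garbleLeft (q : Garbling) (u : InfoStruct K) : InfoStruct K :=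
  u.bind (fun x => (q x.2.1).map (fun c => (x.1, c, x.2.2)))

/-- `u.q` : player 2's signal garbled through `q`. -/
noncomputable def garbleRight (u : InfoStruct K) (q : Garbling) : InfoStruct K :=
  u.bind (fun x => (q x.2.2).map (fun d => (x.1, x.2.1, d)))

/-- The value-based distance `d(u,v) = sup_{g ∈ 𝒢} |val(u,g) − val(v,g)|`. -/
noncomputable def dVal (u v : InfoStruct K) : ℝ :=
  ⨆ g : {g : K → ℕ → ℕ → ℝ // IsPayoff g}, |val u g.1 - val v g.1|

/-- The single-agent distance `d₁(u,v) = sup_{g ∈ 𝒢₁} |val(u,g) − val(v,g)|`. -/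
noncomputable def d1 (u v : InfoStruct K) : ℝ :=
  ⨆ g : {g : K → ℕ → ℕ → ℝ // IsPayoff1 g}, |val u g.1 - val v g.1|

/-- Marginal of an information structure on `K × ℕ` (state, player 1's signal). -/
noncomputable def marg1 (u : InfoStruct K) : PMF (K × ℕ) :=
  u.map (fun x => (x.1, x.2.1))

/-- Garbling of a single-agent information structure:
`(q.w)(k,c) = Σ_s w(k,s)·q(s)({c})`. -/
noncomputable def garble1 (q : Garbling) (w : PMF (K × ℕ)) : PMF (K × ℕ) :=
  w.bind (fun x => (q x.2).map (fun c => (x.1, c)))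

/-- Marginal of an information structure on the states. -/
noncomputable def margK (u : InfoStruct K) : PMF K := u.map Prod.fst

/-- Marginal of an information structure on `K × ℕ` (state, player 2's signal). -/
noncomputable def margKD (u : InfoStruct K) : PMF (K × ℕ) :=
  u.map (fun x => (x.1, x.2.2))

/-- `σ.q` : on signal `c`, draw `c'` according to `q(c)` and play `σ(c')`. -/
noncomputable def compGarble (σ q : Garbling) : Garbling :=
  fun c => (q c).bind σ

/-- `u ∈ 𝒰(L)` : both players' signals are `< L` with probability 1. -/
def InU (L : ℕ) (u : InfoStruct K) : Prop :=
  ∀ x : K × ℕ × ℕ, u x ≠ 0 → x.2.1 < L ∧ x.2.2 < L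

/-- `q ∈ 𝒬(L)` : garbling with values supported on `{0,…,L−1}`. -/
def GarblingIn (L : ℕ) (q : Garbling) : Prop :=
  ∀ n m, q n m ≠ 0 → m < L

/-- The two players' signals are conditionally independent given the state:
`u(k)·u(k,c,d) = u(k,c)·u(k,d)` for all `k, c, d`
(equivalently `u(c,d|k) = u(c|k)·u(d|k)` whenever `u(k) > 0`). -/
def CondIndep (u : InfoStruct K) : Prop :=
  ∀ (k : K) (c d : ℕ),
    (∑' y : ℕ × ℕ, u (k, y)) * u (k, c, d)
      = (∑' d' : ℕ, u (k, c, d')) * (∑' c' : ℕ, u (k, c', d))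

end ValueDistance

namespace ValueDistance

/-- Expectation of `f` under `p`. -/
noncomputable def Ex {α : Type} (p : PMF α) (f : α → ℝ) : ℝ := ∑' x, (p x).toReal * f x

lemma sum_toReal {α : Type} (p : PMF α) : Summable fun x => (p x).toReal :=
  ENNReal.summable_toReal p.tsum_coe_ne_top

lemma tsum_toReal {α : Type} (p : PMF α) : ∑' x, (p x).toReal = 1 := by
  rw [← ENNReal.tsum_toReal_eq (fun x => p.apply_ne_top x), p.tsum_coe]; simp

lemma sum_Ex {α : Type} (p : PMF α) {f : α → ℝ} {B : ℝ} (hf : ∀ x, |f x| ≤ B) :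
    Summable fun x => (p x).toReal * f x := by
  refine Summable.of_norm_bounded ((sum_toReal p).mul_right B) fun x => ?_
  rw [Real.norm_eq_abs, abs_mul, abs_of_nonneg ENNReal.toReal_nonneg]
  exact mul_le_mul_of_nonneg_left (hf x) ENNReal.toReal_nonneg

lemma Ex_mono {α : Type} (p : PMF α) {f g : α → ℝ} {B B' : ℝ} (hf : ∀ x, |f x| ≤ B)
    (hg : ∀ x, |g x| ≤ B') (h : ∀ x, f x ≤ g x) : Ex p f ≤ Ex p g :=
  (sum_Ex p hf).tsum_le_tsum (fun x => mul_le_mul_of_nonneg_left (h x) ENNReal.toReal_nonneg)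
    (sum_Ex p hg)

lemma Ex_const {α : Type} (p : PMF α) (c : ℝ) : Ex p (fun _ => c) = c := by
  unfold Ex; rw [tsum_mul_right, tsum_toReal, one_mul]

lemma Ex_abs {α : Type} (p : PMF α) {f : α → ℝ} {B : ℝ} (hf : ∀ x, |f x| ≤ B) :
    |Ex p f| ≤ B := by
  have hB : ∀ _ : α, |B| ≤ |B| := fun _ => le_rfl
  have hB' : ∀ _ : α, |-B| ≤ |B| := fun _ => by rw [abs_neg]
  rw [abs_le]
  constructor
  · rw [← Ex_const p (-B)]
    exact Ex_mono p hB' hf fun x => (abs_le.1 (hf x)).1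
  · rw [← Ex_const p B]
    exact Ex_mono p hf hB fun x => (abs_le.1 (hf x)).2

lemma Ex_add {α : Type} (p : PMF α) {f g : α → ℝ} {B B' : ℝ} (hf : ∀ x, |f x| ≤ B)
    (hg : ∀ x, |g x| ≤ B') : Ex p (fun x => f x + g x) = Ex p f + Ex p g := by
  unfold Ex
  rw [← (sum_Ex p hf).tsum_add (sum_Ex p hg)]
  simp only [mul_add]

lemma Ex_mul {α : Type} (p : PMF α) (f : α → ℝ) (c : ℝ) :
    Ex p (fun x => c * f x) = c * Ex p f := by
  unfold Ex
  rw [← tsum_mul_left]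
  congr 1; ext x; ring

lemma Ex_pure {α : Type} (a : α) (f : α → ℝ) : Ex (PMF.pure a) f = f a := by
  unfold Ex
  rw [tsum_eq_single a]
  · simp
  · intro b hb; simp [hb]

lemma bind_toReal {α β : Type} (p : PMF α) (κ : α → PMF β) (y : β) :
    ((p.bind κ) y).toReal = Ex p (fun x => (κ x y).toReal) := by
  rw [PMF.bind_apply, ENNReal.tsum_toReal_eq]
  · simp [Ex]
  · intro x; exact ENNReal.mul_ne_top (p.apply_ne_top x) ((κ x).apply_ne_top y)

lemma toReal_le_one {α : Type} (p : PMF α) (x : α) : |(p x).toReal| ≤ 1 := by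
  rw [abs_of_nonneg ENNReal.toReal_nonneg]
  exact ENNReal.toReal_le_of_le_ofReal zero_le_one (by simpa using p.coe_le_one x)

lemma Ex_bind {α β : Type} (p : PMF α) (κ : α → PMF β) {f : β → ℝ} {B : ℝ}
    (hf : ∀ x, |f x| ≤ B) : Ex (p.bind κ) f = Ex p (fun x => Ex (κ x) f) := by
  unfold Ex
  have h1 : ∀ y, ((p.bind κ) y).toReal * f y
      = ∑' x, (p x).toReal * (κ x y).toReal * f y := fun y => by
    rw [bind_toReal, Ex, tsum_mul_right]
  simp only [h1]
  have hs : Summable (Function.uncurry fun (x : α) (y : β) =>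
      (p x).toReal * (κ x y).toReal * f y) := by
    have h0 : ∀ z : α × β, 0 ≤ (p z.1).toReal * (κ z.1 z.2).toReal := fun z =>
      mul_nonneg ENNReal.toReal_nonneg ENNReal.toReal_nonneg
    have h2 : Summable (fun z : α × β => (p z.1).toReal * (κ z.1 z.2).toReal) := by
      refine (summable_prod_of_nonneg h0).2 ⟨fun x => (sum_toReal (κ x)).mul_left (p x).toReal, ?_⟩
      have h3 : (fun x => ∑' y, (p x).toReal * (κ x y).toReal) = fun x => (p x).toReal := by
        funext x; rw [tsum_mul_left, tsum_toReal, mul_one]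
      exact h3 ▸ sum_toReal p
    refine Summable.of_norm_bounded (h2.mul_right B) fun z => ?_
    change |(p z.1).toReal * (κ z.1 z.2).toReal * f z.2| ≤ _
    rw [abs_mul, abs_of_nonneg (h0 z)]
    exact mul_le_mul_of_nonneg_left (hf _) (h0 z)
  rw [hs.tsum_comm]
  simp only [mul_assoc, tsum_mul_left]

lemma Ex_map {α β : Type} (p : PMF α) (h : α → β) {f : β → ℝ} {B : ℝ}
    (hf : ∀ x, |f x| ≤ B) : Ex (p.map h) f = Ex p (fun x => f (h x)) := by
  rw [PMF.map, Ex_bind p _ hf]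
  simp [Ex_pure]

lemma Ex_comm {α β : Type} (p : PMF α) (q : PMF β) {f : α → β → ℝ} {B : ℝ}
    (hf : ∀ x y, |f x y| ≤ B) :
    Ex p (fun x => Ex q fun y => f x y) = Ex q fun y => Ex p fun x => f x y := by
  have h := congrArg (fun r => Ex r fun z : α × β => f z.1 z.2)
    (PMF.bind_comm p q fun x y => PMF.pure (x, y))
  have hf' : ∀ z : α × β, |f z.1 z.2| ≤ B := fun z => hf _ _
  simpa only [Ex_bind _ _ hf', Ex_pure] using h

lemma tv_sum {α : Type} (p q : PMF α) :
    Summable fun x => |(p x).toReal - (q x).toReal| :=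
  ((sum_toReal p).sub (sum_toReal q)).abs

lemma Ex_sub_le_tv {α : Type} (p q : PMF α) {f : α → ℝ} (hf : ∀ x, |f x| ≤ 1) :
    Ex q f - Ex p f ≤ tv p q := by
  unfold Ex tv
  rw [← (sum_Ex q hf).tsum_sub (sum_Ex p hf)]
  refine ((sum_Ex q hf).sub (sum_Ex p hf)).tsum_le_tsum (fun x => ?_) (tv_sum p q)
  rw [← sub_mul]
  refine (le_abs_self _).trans ?_
  rw [abs_mul, abs_sub_comm]
  exact mul_le_of_le_one_right (abs_nonneg _) (hf x)

variable {K : Type}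

lemma payoff_eq (u : InfoStruct K) (g : K → ℕ → ℕ → ℝ) (σ τ : Garbling) :
    payoff u g σ τ =
      Ex u fun x => Ex (σ x.2.1) fun i => Ex (τ x.2.2) fun j => g x.1 i j := by
  unfold payoff Ex
  simp only [mul_assoc, tsum_mul_left]

lemma payoff_abs (u : InfoStruct K) {g : K → ℕ → ℕ → ℝ} (hg : ∀ k i j, |g k i j| ≤ 1)
    (σ τ : Garbling) : |payoff u g σ τ| ≤ 1 := by
  rw [payoff_eq]
  exact Ex_abs _ fun x => Ex_abs _ fun i => Ex_abs _ fun j => hg _ _ _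

lemma IsPayoff.abs_le {g : K → ℕ → ℕ → ℝ} (hg : IsPayoff g) : ∀ k i j, |g k i j| ≤ 1 := by
  obtain ⟨L, h, _⟩ := hg
  intro k i j
  exact _root_.abs_le.2 (h k i j)

lemma bddBelow_payoff (u : InfoStruct K) {g : K → ℕ → ℕ → ℝ} (hg : ∀ k i j, |g k i j| ≤ 1)
    (σ : Garbling) : BddBelow (Set.range fun τ => payoff u g σ τ) :=
  ⟨-1, by rintro _ ⟨τ, rfl⟩; exact (abs_le.1 (payoff_abs u hg σ τ)).1⟩

instance : Nonempty Garbling := ⟨fun n => PMF.pure n⟩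

lemma iInf_le_one (u : InfoStruct K) {g : K → ℕ → ℕ → ℝ} (hg : ∀ k i j, |g k i j| ≤ 1)
    (σ : Garbling) : ⨅ τ, payoff u g σ τ ≤ 1 :=
  (ciInf_le (bddBelow_payoff u hg σ) (fun n => PMF.pure n)).trans
    (abs_le.1 (payoff_abs u hg σ _)).2

lemma bddAbove_inf (u : InfoStruct K) {g : K → ℕ → ℕ → ℝ} (hg : ∀ k i j, |g k i j| ≤ 1) :
    BddAbove (Set.range fun σ => ⨅ τ, payoff u g σ τ) :=
  ⟨1, by rintro _ ⟨σ, rfl⟩; exact iInf_le_one u hg σ⟩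

lemma le_val (u : InfoStruct K) {g : K → ℕ → ℕ → ℝ} (hg : ∀ k i j, |g k i j| ≤ 1)
    {c : ℝ} (σ : Garbling) (h : ∀ τ, c ≤ payoff u g σ τ) : c ≤ val u g :=
  (le_ciInf h).trans (le_ciSup (bddAbove_inf u hg) σ)

lemma val_le (u : InfoStruct K) {g : K → ℕ → ℕ → ℝ} (hg : ∀ k i j, |g k i j| ≤ 1)
    {c : ℝ} (τ : Garbling) (h : ∀ σ, payoff u g σ τ ≤ c) : val u g ≤ c :=
  ciSup_le fun σ => (ciInf_le (bddBelow_payoff u hg σ) τ).trans (h σ)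

lemma val_sub_le_tv (u v : InfoStruct K) {g : K → ℕ → ℕ → ℝ} (hg : ∀ k i j, |g k i j| ≤ 1) :
    val v g - val u g ≤ tv u v := by
  rw [sub_le_iff_le_add]
  refine ciSup_le fun σ => ?_
  rw [← sub_le_iff_le_add']
  refine le_val u hg σ fun τ => ?_
  have h1 := ciInf_le (bddBelow_payoff v hg σ) τ
  have h2 : payoff v g σ τ - payoff u g σ τ ≤ tv u v := by
    rw [payoff_eq, payoff_eq]
    exact Ex_sub_le_tv _ _ fun x => Ex_abs _ fun i => Ex_abs _ fun j => hg _ _ _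
  linarith

lemma Ex_left (q : Garbling) (u : InfoStruct K) {f : K × ℕ × ℕ → ℝ} {B : ℝ}
    (hf : ∀ x, |f x| ≤ B) :
    Ex (garbleLeft q u) f = Ex u fun x => Ex (q x.2.1) fun c => f (x.1, c, x.2.2) := by
  rw [garbleLeft, Ex_bind _ _ hf]
  simp only [Ex_map _ _ hf]

lemma Ex_right (q : Garbling) (u : InfoStruct K) {f : K × ℕ × ℕ → ℝ} {B : ℝ}
    (hf : ∀ x, |f x| ≤ B) :
    Ex (garbleRight u q) f = Ex u fun x => Ex (q x.2.2) fun d => f (x.1, x.2.1, d) := by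
  rw [garbleRight, Ex_bind _ _ hf]
  simp only [Ex_map _ _ hf]

lemma val_left_le (q : Garbling) (u : InfoStruct K) {g : K → ℕ → ℕ → ℝ}
    (hg : ∀ k i j, |g k i j| ≤ 1) : val (garbleLeft q u) g ≤ val u g := by
  refine ciSup_le fun σ => le_val u hg (compGarble σ q) fun τ => ?_
  refine (ciInf_le (bddBelow_payoff _ hg σ) τ).trans (le_of_eq ?_)
  rw [payoff_eq, payoff_eq, Ex_left (B := 1) (f := fun x => Ex (σ x.2.1) fun i => Ex (τ x.2.2) fun j => g x.1 i j)
    (hf := fun x => Ex_abs _ fun i => Ex_abs _ fun j => hg _ _ _)]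
  refine congrArg (Ex u) (funext fun x => ?_)
  exact (Ex_bind (q x.2.1) σ (f := fun i => Ex (τ x.2.2) fun j => g x.1 i j) (B := 1)
    (fun i => Ex_abs _ fun j => hg _ _ _)).symm

lemma le_val_right (q : Garbling) (u : InfoStruct K) {g : K → ℕ → ℕ → ℝ}
    (hg : ∀ k i j, |g k i j| ≤ 1) : val u g ≤ val (garbleRight u q) g := by
  refine ciSup_le fun σ => le_val _ hg σ fun τ => ?_
  refine (ciInf_le (bddBelow_payoff _ hg σ) (compGarble τ q)).trans (le_of_eq ?_)
  rw [payoff_eq, payoff_eq, Ex_right (B := 1) (f := fun x => Ex (σ x.2.1) fun i => Ex (τ x.2.2) fun j => g x.1 i j)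
    (hf := fun x => Ex_abs _ fun i => Ex_abs _ fun j => hg _ _ _)]
  refine congrArg (Ex u) (funext fun x => ?_)
  refine Eq.trans ?_ (Ex_comm (σ x.2.1) (q x.2.2) (B := 1)
    (f := fun i d => Ex (τ d) fun j => g x.1 i j) fun i d => Ex_abs _ fun j => hg _ _ _)
  refine congrArg (Ex (σ x.2.1)) (funext fun i => ?_)
  exact Ex_bind (q x.2.2) τ (f := fun j => g x.1 i j) (B := 1) (fun j => hg _ _ _)

/-- A PMF as an element of `ℓ¹`. -/
noncomputable def toL1 {α : Type} (p : PMF α) : lp (fun _ : α => ℝ) 1 :=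
  ⟨fun x => (p x).toReal, memℓp_gen (by
    simpa [abs_of_nonneg ENNReal.toReal_nonneg] using sum_toReal p)⟩

lemma toL1_apply {α : Type} (p : PMF α) (x : α) : toL1 p x = (p x).toReal := rfl

lemma norm_toL1_sub {α : Type} (p q : PMF α) : ‖toL1 q - toL1 p‖ = tv p q := by
  rw [lp.norm_eq_tsum_rpow (by norm_num)]
  simp [tv, toL1_apply, abs_sub_comm]

lemma dual_toL1 {α : Type} [DecidableEq α] (f : StrongDual ℝ (lp (fun _ : α => ℝ) 1)) (p : PMF α) :
    f (toL1 p) = Ex p fun x => f (lp.single 1 x (1 : ℝ)) := by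
  have h := (lp.hasSum_single (by simp) (toL1 p)).mapL f
  rw [← h.tsum_eq, Ex]
  congr 1; ext x
  rw [← smul_eq_mul, ← map_smul, ← lp.single_smul, toL1_apply, smul_eq_mul, mul_one]

lemma exists_mix (q q' : Garbling) {a b : ℝ} (ha : 0 ≤ a) (hb : 0 ≤ b) (hab : a + b = 1) :
    ∃ r : Garbling, ∀ c n, (r c n).toReal = a * (q c n).toReal + b * (q' c n).toReal := by
  have h0 : ∀ c n, 0 ≤ a * (q c n).toReal + b * (q' c n).toReal := fun c n =>
    add_nonneg (mul_nonneg ha ENNReal.toReal_nonneg) (mul_nonneg hb ENNReal.toReal_nonneg)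
  refine ⟨fun c => ⟨fun n => ENNReal.ofReal (a * (q c n).toReal + b * (q' c n).toReal), ?_⟩,
    fun c n => ENNReal.toReal_ofReal (h0 c n)⟩
  have s1 := (sum_toReal (q c)).mul_left a
  have s2 := (sum_toReal (q' c)).mul_left b
  rw [ENNReal.summable.hasSum_iff, ← ENNReal.ofReal_tsum_of_nonneg (h0 c) (s1.add s2),
    s1.tsum_add s2, tsum_mul_left, tsum_mul_left, tsum_toReal, tsum_toReal, mul_one, mul_one, hab,
    ENNReal.ofReal_one]

lemma Ex_mix {α : Type} {r p q : PMF α} {a b : ℝ}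
    (h : ∀ n, (r n).toReal = a * (p n).toReal + b * (q n).toReal) {f : α → ℝ} {B : ℝ}
    (hf : ∀ x, |f x| ≤ B) : Ex r f = a * Ex p f + b * Ex q f := by
  unfold Ex
  rw [← tsum_mul_left, ← tsum_mul_left,
    ← ((sum_Ex p hf).mul_left a).tsum_add ((sum_Ex q hf).mul_left b)]
  congr 1; ext x; rw [h]; ring

lemma toReal_eq_Ex {α : Type} [DecidableEq α] (p : PMF α) (y : α) :
    (p y).toReal = Ex p (fun x => if x = y then 1 else 0) := by
  unfold Ex
  rw [tsum_eq_single y]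
  · simp
  · intro b hb; simp [hb]

lemma convex_left (u : InfoStruct K) :
    Convex ℝ (Set.range fun q : Garbling => toL1 (garbleLeft q u)) := by
  classical
  rintro _ ⟨q, rfl⟩ _ ⟨q', rfl⟩ a b ha hb hab
  obtain ⟨r, hr⟩ := exists_mix q q' ha hb hab
  refine ⟨r, ?_⟩
  ext y
  have hB : ∀ x : K × ℕ × ℕ, |(if x = y then (1 : ℝ) else 0)| ≤ 1 := by
    intro x; split_ifs <;> simp
  simp only [lp.coeFn_add, lp.coeFn_smul, Pi.add_apply, Pi.smul_apply, smul_eq_mul, toL1_apply]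
  rw [toReal_eq_Ex, toReal_eq_Ex, toReal_eq_Ex, Ex_left _ _ hB, Ex_left _ _ hB, Ex_left _ _ hB,
    ← Ex_mul, ← Ex_mul, ← Ex_add (B := |a|) (B' := |b|)]
  · congr 1; ext x
    exact Ex_mix (hr _) (B := 1) fun c => hB _
  · intro x; rw [abs_mul]
    exact mul_le_of_le_one_right (abs_nonneg _) (Ex_abs _ fun c => hB _)
  · intro x; rw [abs_mul]
    exact mul_le_of_le_one_right (abs_nonneg _) (Ex_abs _ fun c => hB _)

lemma convex_right (u : InfoStruct K) :
    Convex ℝ (Set.range fun q : Garbling => toL1 (garbleRight u q)) := by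
  classical
  rintro _ ⟨q, rfl⟩ _ ⟨q', rfl⟩ a b ha hb hab
  obtain ⟨r, hr⟩ := exists_mix q q' ha hb hab
  refine ⟨r, ?_⟩
  ext y
  have hB : ∀ x : K × ℕ × ℕ, |(if x = y then (1 : ℝ) else 0)| ≤ 1 := by
    intro x; split_ifs <;> simp
  simp only [lp.coeFn_add, lp.coeFn_smul, Pi.add_apply, Pi.smul_apply, smul_eq_mul, toL1_apply]
  rw [toReal_eq_Ex, toReal_eq_Ex, toReal_eq_Ex, Ex_right _ _ hB, Ex_right _ _ hB, Ex_right _ _ hB,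
    ← Ex_mul, ← Ex_mul, ← Ex_add (B := |a|) (B' := |b|)]
  · congr 1; ext x
    exact Ex_mix (hr _) (B := 1) fun c => hB _
  · intro x; rw [abs_mul]
    exact mul_le_of_le_one_right (abs_nonneg _) (Ex_abs _ fun c => hB _)
  · intro x; rw [abs_mul]
    exact mul_le_of_le_one_right (abs_nonneg _) (Ex_abs _ fun c => hB _)

open Pointwise in
lemma exists_separating (u v : InfoStruct K) {r : ℝ} (hr : 0 < r)
    (h : ∀ q q', r ≤ tv (garbleLeft q u) (garbleRight v q')) :
    ∃ g : K × ℕ × ℕ → ℝ, (∀ x, |g x| ≤ 1) ∧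
      ∀ q q', r ≤ Ex (garbleRight v q') g - Ex (garbleLeft q u) g := by
  classical
  have hd : Disjoint (Metric.ball (0 : lp (fun _ : K × ℕ × ℕ => ℝ) 1) r)
      ((Set.range fun q : Garbling => toL1 (garbleRight v q)) -
        (Set.range fun q : Garbling => toL1 (garbleLeft q u))) := by
    rw [Set.disjoint_right]
    rintro _ ⟨_, ⟨q', rfl⟩, _, ⟨q, rfl⟩, rfl⟩
    simp only [mem_ball_zero_iff, not_lt, norm_toL1_sub]
    exact h q q'
  obtain ⟨f, s, hf1, hf2⟩ := geometric_hahn_banach_open (convex_ball _ _) Metric.isOpen_ball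
    ((convex_right v).sub (convex_left u)) hd
  have hs : 0 < s := by simpa using hf1 0 (by simpa using hr)
  have hA : ∀ x : K × ℕ × ℕ, |r / s * f (lp.single 1 x (1 : ℝ))| ≤ 1 := by
    intro x
    set A := f (lp.single 1 x (1 : ℝ)) with hAdef
    have key : ∀ t : ℝ, |t| < r → t * A < s := by
      intro t ht
      have := hf1 (t • lp.single 1 x (1 : ℝ)) (by
        rw [mem_ball_zero_iff, norm_smul, lp.norm_single (by norm_num)]
        simpa using ht)
      simpa using this
    have hle : r * |A| ≤ s := by
      by_contra hlt
      push Not at hlt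
      have hA0 : 0 < |A| := by
        by_contra h0
        nlinarith [abs_nonneg A]
      have hq : s / |A| < r := by rwa [div_lt_iff₀ hA0]
      have hq0 : 0 < s / |A| := by positivity
      have e : s / |A| * |A| = s := by field_simp
      rcases abs_cases A with ⟨h1, _⟩ | ⟨h1, _⟩
      · have := key (s / |A|) (by rwa [abs_of_pos hq0])
        rw [h1] at this e; linarith
      · have := key (-(s / |A|)) (by rwa [abs_neg, abs_of_pos hq0])
        rw [h1] at this e; linarith
    rw [abs_mul, abs_of_pos (by positivity), div_mul_eq_mul_div, div_le_one hs]
    exact hle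
  refine ⟨fun x => r / s * f (lp.single 1 x (1 : ℝ)), hA, fun q q' => ?_⟩
  rw [Ex_mul, Ex_mul, ← dual_toL1, ← dual_toL1, ← mul_sub, ← map_sub]
  have := hf2 _ (Set.sub_mem_sub ⟨q', rfl⟩ ⟨q, rfl⟩)
  calc r = r / s * s := by field_simp
    _ ≤ _ := mul_le_mul_of_nonneg_left this (by positivity)

lemma tail_tendsto (u : InfoStruct K) (π : K × ℕ × ℕ → ℕ) :
    Filter.Tendsto (fun L : ℕ => Ex u fun x => if L ≤ π x then (1 : ℝ) else 0)
      Filter.atTop (nhds 0) := by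
  suffices Filter.Tendsto (fun L : ℕ => ∑' x, (u x).toReal * (if L ≤ π x then (1 : ℝ) else 0))
      Filter.atTop (nhds (∑' x : K × ℕ × ℕ, (0 : ℝ))) by simpa [Ex] using this
  refine tendsto_tsum_of_dominated_convergence (sum_toReal u) (fun x => ?_)
    (Filter.Eventually.of_forall fun L x => ?_)
  · refine tendsto_const_nhds.congr' ?_
    filter_upwards [Filter.eventually_gt_atTop (π x)] with L hL
    simp [not_le.2 hL]
  · split_ifs <;> simp

lemma trunc_val (u v : InfoStruct K) {r ε : ℝ} (hε : 0 < ε) (g₀ : K × ℕ × ℕ → ℝ)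
    (hg₀ : ∀ x, |g₀ x| ≤ 1)
    (h : ∀ q q', r ≤ Ex (garbleRight v q') g₀ - Ex (garbleLeft q u) g₀) :
    ∃ g : K → ℕ → ℕ → ℝ, IsPayoff g ∧ r - 4 * ε ≤ val v g - val u g := by
  obtain ⟨L, hL1, hL2⟩ := (((tail_tendsto v fun x => x.2.1).eventually_lt_const hε).and
    ((tail_tendsto u fun x => x.2.2).eventually_lt_const hε)).exists
  let t : ℕ → ℕ := fun j => if j < L then j else 0
  let g : K → ℕ → ℕ → ℝ := fun k i j => if L ≤ i then -1 else if L ≤ j then 1 else g₀ (k, i, j)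
  have hgP : IsPayoff g := by
    refine ⟨L, fun k i j => ?_, fun k i j hi => by simp [g, hi],
      fun k i j hi hj => by simp [g, not_le.2 hi, hj]⟩
    have := abs_le.1 (hg₀ (k, i, j))
    simp only [g, Set.mem_Icc]
    split_ifs
    · norm_num
    · norm_num
    · exact this
  have hg := hgP.abs_le
  have hp1 : ∀ k i j, g₀ (k, i, t j) + (-2) * (if L ≤ i then (1 : ℝ) else 0) ≤ g k i j := by
    intro k i j
    have := abs_le.1 (hg₀ (k, i, t j))
    by_cases hi : L ≤ i
    · simp only [g, if_pos hi]; linarith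
    · by_cases hj : L ≤ j
      · simp only [g, if_neg hi, if_pos hj]; linarith
      · simp [g, hi, hj, t, not_le.1 hj]
  have hp2 : ∀ k i j, g k i j ≤ g₀ (k, t i, j) + 2 * (if L ≤ j then (1 : ℝ) else 0) := by
    intro k i j
    have := abs_le.1 (hg₀ (k, t i, j))
    by_cases hi : L ≤ i
    · simp only [g, if_pos hi]; split_ifs <;> linarith
    · by_cases hj : L ≤ j
      · simp only [g, if_neg hi, if_pos hj]; linarith
      · simp [g, hi, hj, t, not_le.1 hi]
  have hI : ∀ n : ℕ, |(if L ≤ n then (1 : ℝ) else 0)| ≤ 1 := by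
    intro n; split_ifs <;> simp
  have hI2 : ∀ n : ℕ, |(-2) * (if L ≤ n then (1 : ℝ) else 0)| ≤ 2 := by
    intro n; split_ifs <;> simp
  have hI3 : ∀ n : ℕ, |2 * (if L ≤ n then (1 : ℝ) else 0)| ≤ 2 := by
    intro n; split_ifs <;> simp
  have hv : ∀ τ : Garbling, Ex (garbleRight v fun d => (τ d).map t) g₀ - 2 * ε
      ≤ payoff v g (fun n => PMF.pure n) τ := by
    intro τ
    rw [payoff_eq, Ex_right _ _ hg₀]
    simp only [Ex_pure]
    have : (Ex v fun x => (Ex ((τ x.2.2).map t) fun d => g₀ (x.1, x.2.1, d))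
        + (-2) * (if L ≤ x.2.1 then (1 : ℝ) else 0))
        ≤ Ex v fun x => Ex (τ x.2.2) fun j => g x.1 x.2.1 j := by
      refine Ex_mono (B := 3) (B' := 1) v ?_ (fun x => Ex_abs _ fun j => hg _ _ _) fun x => ?_
      · intro x
        refine (abs_add_le _ _).trans ?_
        have h1 := Ex_abs ((τ x.2.2).map t) (f := fun d => g₀ (x.1, x.2.1, d)) fun d => hg₀ _
        have h2 := hI2 x.2.1
        linarith
      · rw [Ex_map _ _ (B := 1) (fun d => hg₀ _), ← Ex_const (τ x.2.2)
          ((-2) * (if L ≤ x.2.1 then (1 : ℝ) else 0)),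
          ← Ex_add (B := 1) (B' := 2) _ (fun d => hg₀ _) (fun _ => hI2 _)]
        refine Ex_mono (B := 3) (B' := 1) _ (fun d => ?_) (fun j => hg _ _ _) fun d => hp1 _ _ _
        refine (abs_add_le _ _).trans ?_
        have h1 := hg₀ (x.1, x.2.1, t d)
        have h2 := hI2 x.2.1
        linarith
    rw [Ex_add (B := 1) (B' := 2) _ (fun x => Ex_abs _ fun d => hg₀ _) (fun x => hI2 _),
      Ex_mul] at this
    linarith
  have hu : ∀ σ : Garbling, payoff u g σ (fun n => PMF.pure n) ≤
      Ex (garbleLeft (fun d => (σ d).map t) u) g₀ + 2 * ε := by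
    intro σ
    rw [payoff_eq, Ex_left _ _ hg₀]
    simp only [Ex_pure]
    have : (Ex u fun x => Ex (σ x.2.1) fun i => g x.1 i x.2.2) ≤
        (Ex u fun x => (Ex ((σ x.2.1).map t) fun c => g₀ (x.1, c, x.2.2))
        + 2 * (if L ≤ x.2.2 then (1 : ℝ) else 0)) := by
      refine Ex_mono (B := 1) (B' := 3) u (fun x => Ex_abs _ fun j => hg _ _ _) ?_ fun x => ?_
      · intro x
        refine (abs_add_le _ _).trans ?_
        have h1 := Ex_abs ((σ x.2.1).map t) (f := fun c => g₀ (x.1, c, x.2.2)) fun d => hg₀ _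
        have h2 := hI3 x.2.2
        linarith
      · rw [Ex_map _ _ (B := 1) (fun d => hg₀ _), ← Ex_const (σ x.2.1)
          (2 * (if L ≤ x.2.2 then (1 : ℝ) else 0)),
          ← Ex_add (B := 1) (B' := 2) _ (fun d => hg₀ _) (fun _ => hI3 _)]
        refine Ex_mono (B := 1) (B' := 3) _ (fun j => hg _ _ _) (fun d => ?_) fun d => hp2 _ _ _
        refine (abs_add_le _ _).trans ?_
        have h1 := hg₀ (x.1, t d, x.2.2)
        have h2 := hI3 x.2.2
        linarith
    rw [Ex_add (B := 1) (B' := 2) _ (fun x => Ex_abs _ fun d => hg₀ _) (fun x => hI3 _),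
      Ex_mul] at this
    linarith
  refine ⟨g, hgP, ?_⟩
  rw [le_sub_iff_add_le]
  refine le_val v hg _ fun τ => le_trans ?_ (hv τ)
  suffices val u g ≤ Ex (garbleRight v fun d => (τ d).map t) g₀ - r + 2 * ε by linarith
  refine val_le u hg _ fun σ => (hu σ).trans ?_
  have := h (fun d => (σ d).map t) (fun d => (τ d).map t)
  linarith

lemma val_const (u : InfoStruct K) : val u (fun _ _ _ => (-1 : ℝ)) = -1 := by
  unfold val
  simp only [payoff_eq, Ex_const, ciInf_const, ciSup_const]

/-- `sup_{g∈𝒢}(val(v,g) − val(u,g)) = inf{ ‖u' − v'‖ : u' ⪯ u, v' ⪰ v }`,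
where `w ⪰ w'` means `val(w,g) ≥ val(w',g)` for every `g ∈ 𝒢`. -/
theorem sup_val_diff_eq_inf_comparison (K : Type) [Fintype K]
    (hK : 2 ≤ Fintype.card K) (u v : InfoStruct K) :
    (⨆ g : {g : K → ℕ → ℕ → ℝ // IsPayoff g}, (val v g.1 - val u g.1))
      = sInf {r : ℝ | ∃ u' v' : InfoStruct K,
          (∀ g : K → ℕ → ℕ → ℝ, IsPayoff g → val u' g ≤ val u g) ∧
          (∀ g : K → ℕ → ℕ → ℝ, IsPayoff g → val v g ≤ val v' g) ∧
          r = tv u' v'} := by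
  set S := {r : ℝ | ∃ u' v' : InfoStruct K,
          (∀ g : K → ℕ → ℕ → ℝ, IsPayoff g → val u' g ≤ val u g) ∧
          (∀ g : K → ℕ → ℕ → ℝ, IsPayoff g → val v g ≤ val v' g) ∧
          r = tv u' v'} with hS
  have hSne : S.Nonempty := ⟨_, u, v, fun _ _ => le_rfl, fun _ _ => le_rfl, rfl⟩
  have hSbdd : BddBelow S := by
    refine ⟨0, ?_⟩
    rintro _ ⟨u', v', _, _, rfl⟩
    exact tsum_nonneg fun x => abs_nonneg _
  have hub : ∀ r ∈ S, ∀ g : {g : K → ℕ → ℕ → ℝ // IsPayoff g}, val v g.1 - val u g.1 ≤ r := by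
    rintro _ ⟨u', v', h1, h2, rfl⟩ ⟨g, hg⟩
    have := val_sub_le_tv u' v' hg.abs_le
    have := h1 g hg
    have := h2 g hg
    simp only
    linarith
  have hc : IsPayoff (K := K) (fun _ _ _ => (-1 : ℝ)) :=
    ⟨0, fun _ _ _ => by norm_num, fun _ _ _ _ => rfl, fun _ _ _ h => absurd h (by simp)⟩
  have hne : Nonempty {g : K → ℕ → ℕ → ℝ // IsPayoff g} := ⟨⟨_, hc⟩⟩
  have hbdd : BddAbove (Set.range fun g : {g : K → ℕ → ℕ → ℝ // IsPayoff g} =>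
      val v g.1 - val u g.1) := by
    obtain ⟨r, hr⟩ := hSne
    exact ⟨r, by rintro _ ⟨g, rfl⟩; exact hub r hr g⟩
  apply le_antisymm
  · exact ciSup_le fun g => le_csInf hSne fun r hr => hub r hr g
  · have h0 := le_ciSup hbdd ⟨_, hc⟩
    simp only [val_const, sub_self] at h0
    rcases le_or_gt (sInf S) 0 with hr | hr
    · exact hr.trans h0
    · obtain ⟨g₀, hg₀, hsep⟩ := exists_separating u v hr fun q q' =>
        csInf_le hSbdd ⟨_, _, fun g hg => val_left_le q u hg.abs_le,
          fun g hg => le_val_right q' v hg.abs_le, rfl⟩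
      refine le_of_forall_pos_le_add fun ε hε => ?_
      obtain ⟨g, hg, hle⟩ := trunc_val u v (ε := ε / 4) (by positivity) g₀ hg₀ hsep
      have := le_ciSup hbdd ⟨g, hg⟩
      simp only at this
      linarith

end ValueDistance
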